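/- arXiv:math/0405143 — 2 statements merged into one kernel-verified Lean document; each statement's English description precedes it below -/
import Mathlib

section
/- Let p be a prime, let l ≥ 1, let n_1 > n_2 > ... > n_l > 0 be natural numbers, and let t_1, ..., t_l be natural numbers with 1 ≤ t_j ≤ p - 1 for j = 1, ..., l-1 and 1 ≤ t_l ≤ p. Set k = Σ_{i=1}^{l} t_i·(p^{n_i} - 1)/(p - 1). Then the smallest natural number m such that p^k divides m! is exactly z = Σ_{i=1}^{l} t_i·p^{n_i}; that is, p^k ∣ z! and for every m < z, p^k does not divide m!. -/
/-!
Write `N` for the smallest exponent and `T ∈ [1, p]` for its coefficient. The base-`p` expansion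
of `z - 1` can be read off: its digits are the other coefficients, then `T - 1` in place `N`, then
`N` digits `p - 1`. Legendre's formula therefore gives `v_p((z - 1)!) = k - N < k`, without a case
distinction for the carry that `T = p` causes in `z` itself. Since `p ^ N` divides `z`, passing
from `(z - 1)!` to `z!` raises the valuation by at least the missing `N`.
-/

open Finset
open scoped Nat

section FactorialValuation

variable {p : ℕ} [hp : Fact p.Prime]

theorem padicValNat_factorial_eq_div_add (m : ℕ) :
    padicValNat p m ! = padicValNat p (m / p)! + m / p := by
  rw [← padicValNat_mul_div_factorial, padicValNat_factorial_mul]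

theorem padicValNat_factorial_eq_zero_of_lt {a : ℕ} (ha : a < p) : padicValNat p a ! = 0 :=
  padicValNat.eq_zero_of_not_dvd fun h ↦ ha.not_ge (hp.out.dvd_factorial.mp h)

theorem padicValNat_factorial_mul_pow_add (a n : ℕ) {r : ℕ} (hr : r < p ^ n) :
    padicValNat p (a * p ^ n + r)! =
      padicValNat p a ! + a * ∑ j ∈ range n, p ^ j + padicValNat p r ! := by
  induction n generalizing r with
  | zero =>
    obtain rfl : r = 0 := by simpa using hr
    simp
  | succ n ih =>
    have div_eq : (a * p ^ (n + 1) + r) / p = a * p ^ n + r / p := by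
      rw [pow_succ, ← mul_assoc, add_comm, Nat.add_mul_div_right _ _ hp.out.pos, add_comm]
    have div_lt : r / p < p ^ n := Nat.div_lt_of_lt_mul (by rwa [← pow_succ'])
    rw [padicValNat_factorial_eq_div_add, div_eq, ih div_lt, padicValNat_factorial_eq_div_add r,
      sum_range_succ]
    ring

theorem padicValNat_factorial_eq_add_pred {m : ℕ} (hm : m ≠ 0) :
    padicValNat p m ! = padicValNat p m + padicValNat p (m - 1)! := by
  rw [← Nat.mul_factorial_pred hm, padicValNat.mul hm (Nat.factorial_ne_zero _)]

theorem padicValNat_factorial_pow_sub_one_add (n : ℕ) :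
    padicValNat p (p ^ n - 1)! + n = ∑ j ∈ range n, p ^ j := by
  calc padicValNat p (p ^ n - 1)! + n
      = padicValNat p (p ^ n)! := by
        rw [padicValNat_factorial_eq_add_pred (pow_ne_zero n hp.out.ne_zero),
          padicValNat.prime_pow, add_comm]
    _ = ∑ j ∈ range n, p ^ j := by
        simpa using padicValNat_factorial_mul_pow_add 1 n (pow_pos hp.out.pos n)

theorem padicValNat_factorial_sum_mul_pow_add {ι : Type*} {s : Finset ι} {n t : ι → ℕ} {N r : ℕ}
    (hn : Set.InjOn n s) (ht : ∀ i ∈ s, t i < p) (hN : ∀ i ∈ s, N ≤ n i) (hr : r < p ^ N) :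
    padicValNat p (∑ i ∈ s, t i * p ^ n i + r)! =
      ∑ i ∈ s, t i * ∑ j ∈ range (n i), p ^ j + padicValNat p r ! := by
  classical
  induction s using induction_on_min_value n generalizing N r with
  | empty => simp
  | insert a s ha hmin ih =>
    simp only [coe_insert, forall_mem_insert] at hn ht hN
    have r_lt : r < p ^ n a := hr.trans_le (Nat.pow_le_pow_right hp.out.pos hN.1)
    have tail_lt : t a * p ^ n a + r < p ^ (n a + 1) := by
      calc t a * p ^ n a + r < (t a + 1) * p ^ n a := by linarith
        _ ≤ p * p ^ n a := Nat.mul_le_mul_right _ ht.1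
        _ = p ^ (n a + 1) := (pow_succ' p _).symm
    have lt_exponent : ∀ i ∈ s, n a < n i := fun i hi ↦
      (hmin i hi).lt_of_ne fun h ↦ ha (hn (.inl rfl) (.inr hi) h ▸ hi)
    rw [sum_insert ha, sum_insert ha, add_comm (t a * _), add_assoc,
      ih (hn.mono (Set.subset_insert _ _)) ht.2 lt_exponent tail_lt,
      padicValNat_factorial_mul_pow_add _ _ r_lt, padicValNat_factorial_eq_zero_of_lt ht.1]
    ring

theorem padicValNat_factorial_mul_pow_sub_one_add {T : ℕ} (N : ℕ) (hT : 0 < T) (hTp : T ≤ p) :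
    padicValNat p (T * p ^ N - 1)! + N = T * ∑ j ∈ range N, p ^ j := by
  obtain ⟨a, rfl⟩ : ∃ a, T = a + 1 := Nat.exists_eq_add_one.mpr hT
  have pos : 0 < p ^ N := pow_pos hp.out.pos N
  have pred_eq : (a + 1) * p ^ N - 1 = a * p ^ N + (p ^ N - 1) := by
    rw [add_one_mul, Nat.add_sub_assoc pos]
  rw [pred_eq, padicValNat_factorial_mul_pow_add a N (Nat.sub_one_lt_of_lt pos),
    padicValNat_factorial_eq_zero_of_lt hTp, zero_add, add_assoc,
    padicValNat_factorial_pow_sub_one_add, add_one_mul]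

theorem padicValNat_factorial_sum_mul_pow_sub_one_add {ι : Type*} {s : Finset ι} {n t : ι → ℕ}
    {N T : ℕ} (hn : Set.InjOn n s) (ht : ∀ i ∈ s, t i < p) (hN : ∀ i ∈ s, N < n i)
    (hT : 0 < T) (hTp : T ≤ p) :
    padicValNat p (∑ i ∈ s, t i * p ^ n i + T * p ^ N - 1)! + N =
      ∑ i ∈ s, t i * ∑ j ∈ range (n i), p ^ j + T * ∑ j ∈ range N, p ^ j := by
  have pos : 0 < T * p ^ N := Nat.mul_pos hT (pow_pos hp.out.pos N)
  have pred_lt : T * p ^ N - 1 < p ^ (N + 1) := by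
    rw [pow_succ']
    exact (Nat.sub_one_lt_of_lt pos).trans_le (Nat.mul_le_mul_right _ hTp)
  rw [Nat.add_sub_assoc pos, padicValNat_factorial_sum_mul_pow_add hn ht hN pred_lt, add_assoc,
    padicValNat_factorial_mul_pow_sub_one_add N hT hTp]

theorem isLeast_pow_dvd_factorial {k z : ℕ} (hlt : padicValNat p (z - 1)! < k)
    (hle : k ≤ padicValNat p z !) : IsLeast {m | p ^ k ∣ m !} z := by
  refine ⟨(padicValNat_dvd_iff_le z.factorial_ne_zero).mpr hle, fun m hm ↦ ?_⟩
  by_contra! hmz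
  have dvd_pred : p ^ k ∣ (z - 1)! :=
    hm.trans (Nat.factorial_dvd_factorial (Nat.le_sub_one_of_lt hmz))
  exact hlt.not_ge ((padicValNat_dvd_iff_le (Nat.factorial_ne_zero _)).mp dvd_pred)

end FactorialValuation

theorem smallest_factorial_multiple_of_prime_pow (p : ℕ) (hp : p.Prime) (l : ℕ)
    (n t : Fin (l + 1) → ℕ) (hanti : StrictAnti n) (hnpos : ∀ i, 0 < n i)
    (ht : ∀ i : Fin (l + 1), i ≠ Fin.last l → 1 ≤ t i ∧ t i ≤ p - 1)
    (htl : 1 ≤ t (Fin.last l) ∧ t (Fin.last l) ≤ p) :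
    p ^ (∑ i, t i * ((p ^ n i - 1) / (p - 1))) ∣
      Nat.factorial (∑ i, t i * p ^ n i) ∧
    ∀ m < ∑ i, t i * p ^ n i,
      ¬ p ^ (∑ i, t i * ((p ^ n i - 1) / (p - 1))) ∣ Nat.factorial m := by
  have : Fact p.Prime := ⟨hp⟩
  simp only [← Nat.geomSum_eq hp.two_le]
  set k := ∑ i, t i * ∑ j ∈ range (n i), p ^ j with hk
  set z := ∑ i, t i * p ^ n i with hz
  have val_pred : padicValNat p (z - 1)! + n (Fin.last l) = k := by
    rw [hk, hz, Fin.sum_univ_castSucc, Fin.sum_univ_castSucc]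
    exact padicValNat_factorial_sum_mul_pow_sub_one_add
      (hanti.injective.comp (Fin.castSucc_injective l)).injOn
      (fun i _ ↦ Nat.lt_of_le_sub_one hp.pos (ht _ i.castSucc_ne_last).2)
      (fun i _ ↦ hanti i.castSucc_lt_last) htl.1 htl.2
  have pow_dvd : p ^ n (Fin.last l) ∣ z :=
    dvd_sum fun i _ ↦ (pow_dvd_pow p (hanti.antitone i.le_last)).mul_left _
  have z_ne_zero : z ≠ 0 :=
    (sum_pos' (fun _ _ ↦ Nat.zero_le _)
      ⟨Fin.last l, mem_univ _, Nat.mul_pos htl.1 (pow_pos hp.pos _)⟩).ne'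
  have le_val : n (Fin.last l) ≤ padicValNat p z := (padicValNat_dvd_iff_le z_ne_zero).mp pow_dvd
  have least : IsLeast {m | p ^ k ∣ m !} z := isLeast_pow_dvd_factorial
    (by have := hnpos (Fin.last l); omega)
    (by rw [padicValNat_factorial_eq_add_pred z_ne_zero]; omega)
  exact ⟨least.1, fun m hm hdvd ↦ hm.not_ge (least.2 hdvd)⟩
end

section
/- Let n be a natural number with n > 4. Then S(n) = n if and only if n is prime, where S(n) is the smallest natural number m with n ∣ m!. -/
/-- The Smarandache function: the smallest `m` such that `n` divides `m!`. -/
noncomputable def S (n : ℕ) : ℕ := sInf {m : ℕ | n ∣ Nat.factorial m}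

/-!
Subadditivity, `S (a * b) ≤ S a + S b`, follows from `i! * j! ∣ (i + j)!`. A composite `n > 4` is
`a * b` with `a, b ≥ 2` not both `2`, so `S n ≤ S a + S b ≤ a + b < a * b = n`. Conversely, a prime
`p` divides `m!` exactly when `p ≤ m`.
-/

open scoped Nat

theorem dvd_factorial_S {n : ℕ} (hn : n ≠ 0) : n ∣ (S n)! :=
  Nat.sInf_mem (s := {m | n ∣ m !}) ⟨n, Nat.dvd_factorial hn.pos le_rfl⟩

theorem S_le_iff_dvd_factorial {n m : ℕ} (hn : n ≠ 0) : S n ≤ m ↔ n ∣ m ! :=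
  ⟨fun h ↦ (dvd_factorial_S hn).trans (Nat.factorial_dvd_factorial h), fun h ↦ Nat.sInf_le h⟩

theorem S_le_self {n : ℕ} (hn : n ≠ 0) : S n ≤ n :=
  (S_le_iff_dvd_factorial hn).mpr (Nat.dvd_factorial hn.pos le_rfl)

theorem S_mul_le_add {a b : ℕ} (ha : a ≠ 0) (hb : b ≠ 0) : S (a * b) ≤ S a + S b :=
  (S_le_iff_dvd_factorial (mul_ne_zero ha hb)).mpr <|
    (mul_dvd_mul (dvd_factorial_S ha) (dvd_factorial_S hb)).trans
      (Nat.factorial_mul_factorial_dvd_factorial_add _ _)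

theorem S_eq_self_of_prime {p : ℕ} (hp : p.Prime) : S p = p :=
  eq_of_forall_ge_iff fun _ ↦ (S_le_iff_dvd_factorial hp.ne_zero).trans hp.dvd_factorial

theorem add_lt_mul_of_four_lt_mul {R : Type*} [Semiring R] [LinearOrder R]
    [IsStrictOrderedRing R] [ExistsAddOfLE R] {a b : R} (ha : 2 ≤ a) (hb : 2 ≤ b)
    (hab : 4 < a * b) : a + b < a * b := by
  refine lt_of_mul_lt_mul_left ?_ (zero_le_two (α := R))
  calc
    2 * (a + b) = 2 * b + a * 2 := by rw [mul_add, add_comm, two_mul a, mul_two]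
    _ ≤ 2 * 2 + a * b := mul_add_mul_le_mul_add_mul ha hb
    _ = 4 + a * b := by norm_num
    _ < a * b + a * b := by gcongr
    _ = 2 * (a * b) := (two_mul _).symm

theorem S_lt_self_of_not_prime {n : ℕ} (hn : 4 < n) (hnp : ¬ n.Prime) : S n < n := by
  obtain ⟨a, b, ha_lt, hb_lt, rfl⟩ := (Nat.not_prime_iff_exists_mul_eq (by lia)).mp hnp
  have ha : 2 ≤ a := one_lt_of_lt_mul_right₀ b.zero_le hb_lt
  have hb : 2 ≤ b := one_lt_of_lt_mul_left₀ a.zero_le ha_lt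
  calc
    S (a * b) ≤ S a + S b := S_mul_le_add (by lia) (by lia)
    _ ≤ a + b := add_le_add (S_le_self (by lia)) (S_le_self (by lia))
    _ < a * b := add_lt_mul_of_four_lt_mul ha hb hn

theorem smarandache_eq_self_iff_prime (n : ℕ) (hn : 4 < n) :
    S n = n ↔ n.Prime :=
  ⟨fun h ↦ by_contra fun hnp ↦ (S_lt_self_of_not_prime hn hnp).ne h, S_eq_self_of_prime⟩
end
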